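/- Let λ > 0 be fixed and suppose that for every t ≥ 1 the conditional expectation E[exp(λ|ε_t|) | F_{t-1}] is finite almost surely. Define e_t(λ) = ‖G_t‖² · E[exp(λ|ε_t|) − λ|ε_t| − 1 | F_{t-1}]. Then the real-valued process S_t = cosh(λ‖(ρI + V_t)^{-1/2} M_t‖) · exp(−Σ_{i=1}^t e_i(λ)) (with S_0 = 1) is a nonnegative supermartingale with respect to the filtration (F_t). -/

import Mathlib

open MeasureTheory Filter Real
open scoped RealInnerProductSpace

noncomputable def outerProd {H : Type*} [NormedAddCommGroup H] [InnerProductSpace ℝ H]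
    (x : H) : H →L[ℝ] H :=
  (innerSL ℝ x).smulRight x

/-!
By the law of cosines and the convexity of `y ↦ cosh √y` (Pinelis), `cosh ‖u + d‖` is at most
`cosh ‖u‖ (exp ‖d‖ - ‖d‖)` plus a term linear in `d`. With `u = l R_t M_{t-1}` and
`d = l ε_t R_t X_t`, where `R_t = (ρ I + V_t)^{-1/2}`, the linear term has conditional mean zero,
and since `‖R_t X_t‖ ≤ 1` the remainder `exp ‖d‖ - ‖d‖ - 1` is at most
`‖R_t X_t‖² (exp (l |ε_t|) - l |ε_t| - 1)`. Hence the conditional mean of `cosh (l ‖R_t M_t‖)` is at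
most `cosh (l ‖R_t M_{t-1}‖) (1 + e_t)`, with `1 + e_t ≤ exp e_t` and `‖R_t M_{t-1}‖ ≤
‖R_{t-1} M_{t-1}‖` because operator inversion is antitone. No integrability of `cosh (l ‖R_t M_t‖)`
is available beforehand, so one first conditions its ratio to the predictable factor
`cosh (l ‖R_t M_{t-1}‖)`, which is integrable, and then recovers the integrability of the product
from the bound on its conditional mean.
-/

section RealInequalities

lemma hasSum_cosh_sqrt {y : ℝ} (hy : 0 ≤ y) :
    HasSum (fun n : ℕ ↦ y ^ n / (2 * n).factorial) (cosh √y) := by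
  simpa only [pow_mul, sq_sqrt hy] using hasSum_cosh √y

lemma convexOn_cosh_sqrt : ConvexOn ℝ (Set.Ici 0) fun y ↦ cosh √y := by
  refine ⟨convex_Ici 0, fun p hp q hq a b ha hb hab ↦ ?_⟩
  refine hasSum_le (fun n ↦ ?_) (hasSum_cosh_sqrt (convex_Ici 0 hp hq ha hb hab))
    (((hasSum_cosh_sqrt hp).mul_left a).add ((hasSum_cosh_sqrt hq).mul_left b))
  rw [← mul_div_assoc, ← mul_div_assoc, ← add_div]
  gcongr
  exact (convexOn_pow n).2 hp hq ha hb hab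

lemma hasSum_exp_sub_sub_one (x : ℝ) :
    HasSum (fun n : ℕ ↦ x ^ (n + 2) / (n + 2).factorial) (exp x - x - 1) := by
  have hexp : HasSum (fun n : ℕ ↦ x ^ n / n.factorial) (exp x) :=
    exp_eq_exp_ℝ ▸ NormedSpace.expSeries_div_hasSum_exp x
  simpa [Finset.sum_range_succ, sub_sub, add_comm] using (hasSum_nat_add_iff' 2).2 hexp

lemma exp_mul_sub_sub_one_le {c z : ℝ} (hc₀ : 0 ≤ c) (hc₁ : c ≤ 1) (hz : 0 ≤ z) :
    exp (c * z) - c * z - 1 ≤ c ^ 2 * (exp z - z - 1) := by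
  refine hasSum_le (fun n ↦ ?_) (hasSum_exp_sub_sub_one (c * z))
    ((hasSum_exp_sub_sub_one z).mul_left (c ^ 2))
  rw [← mul_div_assoc, mul_pow]
  gcongr ?_ * _ / _
  exact pow_le_pow_of_le_one hc₀ hc₁ (Nat.le_add_left 2 n)

end RealInequalities

section InnerProductSpace

variable {H : Type*} [NormedAddCommGroup H] [InnerProductSpace ℝ H]

/-- The derivative at `u`, in the direction `g`, of the function `log (cosh ‖·‖)`; the convention
`0 / 0 = 0` gives the correct value `0` at `u = 0`. -/
noncomputable def logCoshNormDeriv (u g : H) : ℝ := tanh ‖u‖ / ‖u‖ * ⟪u, g⟫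

lemma abs_logCoshNormDeriv_le (u g : H) : |logCoshNormDeriv u g| ≤ ‖g‖ := by
  rw [logCoshNormDeriv, abs_mul, abs_div, abs_norm]
  calc |tanh ‖u‖| / ‖u‖ * |⟪u, g⟫|
      ≤ 1 / ‖u‖ * (‖u‖ * ‖g‖) := by
        gcongr
        exacts [(abs_tanh_lt_one _).le, abs_real_inner_le_norm u g]
    _ = ‖u‖ / ‖u‖ * ‖g‖ := by ring
    _ ≤ ‖g‖ := mul_le_of_le_one_left (norm_nonneg g) (div_self_le_one _)

lemma cosh_norm_add_le (u d : H) :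
    cosh ‖u + d‖ ≤ cosh ‖u‖ * cosh ‖d‖ + ⟪u, d⟫ / (‖u‖ * ‖d‖) * (sinh ‖u‖ * sinh ‖d‖) := by
  set θ := ⟪u, d⟫ / (‖u‖ * ‖d‖)
  obtain ⟨hθ₁, hθ₂⟩ := abs_le.1 (abs_real_inner_div_norm_mul_norm_le_one u d)
  have hinner : ⟪u, d⟫ = θ * (‖u‖ * ‖d‖) :=
    (div_mul_cancel_of_imp fun h ↦ by
      rcases mul_eq_zero.1 h with h | h <;> simp [norm_eq_zero.1 h]).symm
  have hnorm_sq : ‖u + d‖ ^ 2 =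
      (1 + θ) / 2 * (‖u‖ + ‖d‖) ^ 2 + (1 - θ) / 2 * (‖u‖ - ‖d‖) ^ 2 := by
    rw [norm_add_sq_real, hinner]
    ring
  have hconv := convexOn_cosh_sqrt.2 (sq_nonneg (‖u‖ + ‖d‖)) (sq_nonneg (‖u‖ - ‖d‖))
    (by linarith : 0 ≤ (1 + θ) / 2) (by linarith : 0 ≤ (1 - θ) / 2) (by ring)
  simp only [smul_eq_mul, ← hnorm_sq, sqrt_sq_eq_abs, cosh_abs, cosh_add, cosh_sub] at hconv
  linarith

lemma cosh_norm_add_le_cosh_norm_mul (u d : H) :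
    cosh ‖u + d‖ ≤ cosh ‖u‖ * (exp ‖d‖ - ‖d‖ + logCoshNormDeriv u d) := by
  set θ := ⟪u, d⟫ / (‖u‖ * ‖d‖) with hθ
  have hθ₁ : θ ≤ 1 := (abs_le.1 (abs_real_inner_div_norm_mul_norm_le_one u d)).2
  have hderiv : cosh ‖u‖ * logCoshNormDeriv u d = θ * sinh ‖u‖ * ‖d‖ := by
    rcases eq_or_ne d 0 with rfl | hd
    · simp [logCoshNormDeriv]
    · rw [logCoshNormDeriv, tanh_eq_sinh_div_cosh, hθ]
      field_simp
  have hsinh : 0 ≤ sinh ‖d‖ - ‖d‖ := sub_nonneg.2 (self_le_sinh_iff.2 (norm_nonneg d))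
  have hθ_sinh : θ * sinh ‖u‖ ≤ cosh ‖u‖ :=
    (mul_le_of_le_one_left (sinh_nonneg_iff.2 (norm_nonneg u)) hθ₁).trans (sinh_lt_cosh _).le
  have hmul := mul_le_mul_of_nonneg_right hθ_sinh hsinh
  have hadd := cosh_norm_add_le u d
  rw [mul_add, hderiv, ← cosh_add_sinh]
  linarith

lemma cosh_mul_norm_add_smul_le {l : ℝ} (hl : 0 ≤ l) (u : H) {g : H} (hg : ‖g‖ ≤ 1) (x : ℝ) :
    cosh (l * ‖u + x • g‖) ≤ cosh (l * ‖u‖) *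
      (1 + ‖g‖ ^ 2 * (exp (l * |x|) - l * |x| - 1) + logCoshNormDeriv (l • u) (l • g) * x) := by
  have hnorm (v : H) : ‖l • v‖ = l * ‖v‖ := norm_smul_of_nonneg hl v
  have hscale := exp_mul_sub_sub_one_le (norm_nonneg g) hg (mul_nonneg hl (abs_nonneg x))
  have hd : ‖x • l • g‖ = ‖g‖ * (l * |x|) := by
    rw [norm_smul, hnorm, norm_eq_abs]; ring
  have hderiv : logCoshNormDeriv (l • u) (x • l • g) = logCoshNormDeriv (l • u) (l • g) * x := by
    rw [logCoshNormDeriv, logCoshNormDeriv, inner_smul_right]; ring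
  calc cosh (l * ‖u + x • g‖) = cosh ‖l • u + x • l • g‖ := by
        rw [← hnorm, smul_add, smul_comm]
    _ ≤ cosh ‖l • u‖ * (exp ‖x • l • g‖ - ‖x • l • g‖ + logCoshNormDeriv (l • u) (x • l • g)) :=
        cosh_norm_add_le_cosh_norm_mul _ _
    _ ≤ _ := by
        rw [hnorm, hd, hderiv]
        gcongr
        linarith

end InnerProductSpace

section Operators

variable {H : Type*} [NormedAddCommGroup H] [InnerProductSpace ℝ H]

lemma outerProd_apply (x y : H) : outerProd x y = ⟪x, y⟫ • x := by
  simp [outerProd]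

lemma outerProd_nonneg (x : H) : 0 ≤ outerProd x := by
  rw [ContinuousLinearMap.nonneg_iff_isPositive]
  exact InnerProductSpace.isPositive_rankOne_self x

lemma continuous_outerProd : Continuous (outerProd : H → H →L[ℝ] H) := by
  unfold outerProd
  fun_prop

/-- `R` is an inverse square root of the operator `A`: it is symmetric and its square is the
two-sided inverse of `A`. Positivity is not part of the notion, since `‖R x‖ ^ 2 = ⟪x, A⁻¹ x⟫` is
the same for every such `R`. -/
structure IsInvSqrt (A R : H →L[ℝ] H) : Prop where
  isSymmetric : R.IsSymmetric
  sq_mul : R * R * A = 1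
  mul_sq : A * (R * R) = 1

namespace IsInvSqrt

variable {A B Q R T : H →L[ℝ] H}

lemma of_sqrt (hQ : Q.IsSymmetric) (hsq : Q * Q = A) (hRQ : R * Q = 1) (hQR : Q * R = 1) :
    IsInvSqrt A R where
  isSymmetric x y := by
    have hQR_apply (z : H) : Q (R z) = z := DFunLike.congr_fun hQR z
    calc ⟪R x, y⟫ = ⟪R x, Q (R y)⟫ := by rw [hQR_apply]
      _ = ⟪Q (R x), R y⟫ := (hQ _ _).symm
      _ = ⟪x, R y⟫ := by rw [hQR_apply]
  sq_mul := by rw [← hsq, mul_assoc, ← mul_assoc R Q Q, hRQ, one_mul, hRQ]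
  mul_sq := by rw [← hsq, mul_assoc, ← mul_assoc Q R R, hQR, one_mul, hQR]

lemma sq_mul_apply (h : IsInvSqrt A R) (x : H) : R (R (A x)) = x :=
    DFunLike.congr_fun h.sq_mul x

lemma mul_sq_apply (h : IsInvSqrt A R) (x : H) : A (R (R x)) = x :=
    DFunLike.congr_fun h.mul_sq x

lemma isUnit (h : IsInvSqrt A R) : IsUnit A := ⟨⟨A, R * R, h.mul_sq, h.sq_mul⟩, rfl⟩

lemma inverse_eq (h : IsInvSqrt A R) : Ring.inverse A = R * R :=
  Ring.inverse_unit ⟨A, R * R, h.mul_sq, h.sq_mul⟩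

lemma inner_map_map (h : IsInvSqrt A R) (x y : H) : ⟪R x, R y⟫ = ⟪x, Ring.inverse A y⟫ := by
  rw [h.inverse_eq]
  exact h.isSymmetric x (R y)

lemma inner_left (h : IsInvSqrt A R) (x y : H) : ⟪x, y⟫ = ⟪R x, R (A y)⟫ := by
  conv_lhs => rw [← h.sq_mul_apply y]
  exact (h.isSymmetric x (R (A y))).symm

lemma nonneg (h : IsInvSqrt A R) : 0 ≤ A := by
  rw [ContinuousLinearMap.nonneg_iff_isPositive, ContinuousLinearMap.isPositive_iff]
  refine ⟨fun x y ↦ ?_, fun x ↦ ?_⟩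
  · exact (h.inner_left (A x) y).trans
      ((real_inner_comm _ _).trans ((h.inner_left (A y) x).symm.trans (real_inner_comm _ _)))
  · rw [h.inner_left (A x) x]
    exact real_inner_self_nonneg

lemma norm_map_sq (h : IsInvSqrt A R) (x : H) : ‖R x‖ ^ 2 = ⟪x, R (R x)⟫ := by
  rw [← real_inner_self_eq_norm_sq]
  exact h.isSymmetric x (R x)

lemma norm_map_map_map_sq (h : IsInvSqrt A R) (x : H) : ‖R (A x)‖ ^ 2 = ⟪A x, x⟫ := by
  rw [h.norm_map_sq, h.sq_mul_apply]

lemma norm_map_le_of_le (hR : IsInvSqrt A R) (hT : IsInvSqrt B T) (hAB : A ≤ B) (x : H) :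
    ‖T x‖ ≤ ‖R x‖ := by
  set y := T (T x)
  have hquad : ‖R (A y)‖ ^ 2 ≤ ‖T x‖ ^ 2 := by
    have hsub := ((ContinuousLinearMap.le_def A B).1 hAB).inner_nonneg_left y
    rw [_root_.sub_apply, inner_sub_left, hT.mul_sq_apply, ← hT.norm_map_sq,
      ← hR.norm_map_map_map_sq] at hsub
    exact sub_nonneg.1 hsub
  have hmul : ‖T x‖ * ‖T x‖ ≤ ‖R x‖ * ‖T x‖ :=
    calc ‖T x‖ * ‖T x‖ = ⟪R x, R (A y)⟫ := by
          rw [← sq, hT.norm_map_sq, hR.inner_left]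
      _ ≤ ‖R x‖ * ‖R (A y)‖ := real_inner_le_norm _ _
      _ ≤ ‖R x‖ * ‖T x‖ := by
        gcongr
        exact (sq_le_sq₀ (norm_nonneg _) (norm_nonneg _)).1 hquad
  rcases (norm_nonneg (T x)).eq_or_lt with hzero | hpos
  · exact hzero ▸ norm_nonneg _
  · exact le_of_mul_le_mul_right hmul hpos

lemma norm_map_le_one (hR : IsInvSqrt A R) {x : H} (hx : outerProd x ≤ A) : ‖R x‖ ≤ 1 := by
  have hsub := ((ContinuousLinearMap.le_def _ A).1 hx).inner_nonneg_left (R (R x))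
  rw [_root_.sub_apply, inner_sub_left, hR.mul_sq_apply, outerProd_apply, real_inner_smul_left,
    ← hR.norm_map_sq] at hsub
  nlinarith [norm_nonneg (R x), sq_nonneg (‖R x‖ ^ 2 - 1)]

end IsInvSqrt

/-- The regularised Gram (design) operator `A₀ + ∑ i ∈ [1, t], xᵢ xᵢᵀ`; the regulariser `A₀` is
`ρ I` in ridge regression. -/
noncomputable def regGram (A₀ : H →L[ℝ] H) (x : ℕ → H) (t : ℕ) : H →L[ℝ] H :=
  A₀ + ∑ i ∈ Finset.Icc 1 t, outerProd (x i)

lemma regGram_succ (A₀ : H →L[ℝ] H) (x : ℕ → H) (t : ℕ) :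
    regGram A₀ x (t + 1) = regGram A₀ x t + outerProd (x (t + 1)) := by
  rw [regGram, Finset.sum_Icc_succ_top (Nat.le_add_left 1 t), ← add_assoc, regGram]

lemma regGram_le_regGram_succ (A₀ : H →L[ℝ] H) (x : ℕ → H) (t : ℕ) :
    regGram A₀ x t ≤ regGram A₀ x (t + 1) := by
  rw [regGram_succ, ContinuousLinearMap.le_def, add_sub_cancel_left,
    ← ContinuousLinearMap.nonneg_iff_isPositive]
  exact outerProd_nonneg _

lemma outerProd_le_regGram_succ {A₀ : H →L[ℝ] H} {x : ℕ → H} {t : ℕ} (h : 0 ≤ regGram A₀ x t) :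
    outerProd (x (t + 1)) ≤ regGram A₀ x (t + 1) := by
  rwa [regGram_succ, ContinuousLinearMap.le_def, add_sub_cancel_right,
    ← ContinuousLinearMap.nonneg_iff_isPositive]

end Operators

section Measurability

variable {Ω : Type*} {m : MeasurableSpace Ω}

lemma stronglyMeasurable_comp_of_continuousAt {α β : Type*} [TopologicalSpace α]
    [TopologicalSpace β] {f : Ω → α} {g : α → β} (hf : StronglyMeasurable f)
    (hg : ∀ ω, ContinuousAt g (f ω)) : StronglyMeasurable (g ∘ f) :=
  ⟨fun n ↦ (hf.approx n).map g, fun ω ↦ (hg ω).tendsto.comp (hf.tendsto_approx ω)⟩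

lemma stronglyMeasurable_ringInverse {𝓡 : Type*} [NormedRing 𝓡] [HasSummableGeomSeries 𝓡]
    {f : Ω → 𝓡} (hf : StronglyMeasurable f) (hunit : ∀ ω, IsUnit (f ω)) :
    StronglyMeasurable fun ω ↦ Ring.inverse (f ω) :=
  stronglyMeasurable_comp_of_continuousAt hf fun ω ↦
    NormedRing.inverse_continuousAt (hunit ω).unit

variable {H : Type*} [NormedAddCommGroup H] [InnerProductSpace ℝ H]

lemma stronglyMeasurable_regGram (A₀ : H →L[ℝ] H) {X : ℕ → Ω → H} {t : ℕ}
    (hX : ∀ i ∈ Finset.Icc 1 t, StronglyMeasurable (X i)) :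
    StronglyMeasurable fun ω ↦ regGram A₀ (X · ω) t :=
  stronglyMeasurable_const.add <| Finset.stronglyMeasurable_fun_sum _ fun i hi ↦
    continuous_outerProd.comp_stronglyMeasurable (hX i hi)

variable [CompleteSpace H] {A R : Ω → H →L[ℝ] H}

lemma stronglyMeasurable_inner_invSqrt (hA : StronglyMeasurable A)
    (hR : ∀ ω, IsInvSqrt (A ω) (R ω)) {x y : Ω → H} (hx : StronglyMeasurable x)
    (hy : StronglyMeasurable y) : StronglyMeasurable fun ω ↦ ⟪R ω (x ω), R ω (y ω)⟫ := by
  simp only [(hR _).inner_map_map]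
  have heval : Continuous fun p : (H →L[ℝ] H) × H ↦ p.1 p.2 := by fun_prop
  exact hx.inner <| heval.comp_stronglyMeasurable <|
    (stronglyMeasurable_ringInverse hA fun ω ↦ (hR ω).isUnit).prodMk hy

lemma stronglyMeasurable_norm_invSqrt (hA : StronglyMeasurable A)
    (hR : ∀ ω, IsInvSqrt (A ω) (R ω)) {x : Ω → H} (hx : StronglyMeasurable x) :
    StronglyMeasurable fun ω ↦ ‖R ω (x ω)‖ := by
  simp only [norm_eq_sqrt_real_inner]
  exact continuous_sqrt.comp_stronglyMeasurable (stronglyMeasurable_inner_invSqrt hA hR hx hx)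

end Measurability

section CondExp

variable {Ω : Type*} {m m0 : MeasurableSpace Ω} {μ : Measure Ω} [IsFiniteMeasure μ]

/-- The integrals of `D * Y` over the sets `{D ≤ n}` are those of `D * μ[Y | m]`, hence bounded. -/
lemma integrable_mul_of_mul_condExp_le (hm : m ≤ m0) {D Y g : Ω → ℝ} (hD : StronglyMeasurable[m] D)
    (hD₀ : 0 ≤ D) (hY : Integrable Y μ) (hY₀ : 0 ≤ Y) (hg : Integrable g μ)
    (hle : D * μ[Y | m] ≤ᵐ[μ] g) : Integrable (D * Y) μ := by
  let s (n : ℕ) : Set Ω := {ω | D ω ≤ n}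
  have hs (n : ℕ) : MeasurableSet[m] (s n) := hD.measurable measurableSet_Iic
  have hcover : AECover μ atTop s := ⟨.of_forall fun ω ↦
    tendsto_natCast_atTop_atTop.eventually_ge_atTop (D ω), fun n ↦ hm _ (hs n)⟩
  have hDs (n : ℕ) : StronglyMeasurable[m] ((s n).indicator D) := hD.indicator (hs n)
  have hbound (n : ℕ) : ∀ᵐ ω ∂μ, ‖(s n).indicator D ω‖ ≤ n := .of_forall fun ω ↦ by
    rw [norm_of_nonneg (Set.indicator_nonneg (fun ω _ ↦ hD₀ ω) ω)]
    exact Set.indicator_le' (fun ω hω ↦ hω) (fun ω _ ↦ n.cast_nonneg) ω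
  have hprod (n : ℕ) : (s n).indicator (D * Y) = (s n).indicator D * Y :=
    funext fun ω ↦ Set.indicator_mul_left (s n) D Y
  have hint (n : ℕ) : Integrable ((s n).indicator D * Y) μ :=
    hY.bdd_mul ((hDs n).mono hm).aestronglyMeasurable (hbound n)
  refine hcover.integrable_of_integral_bounded_of_nonneg_ae (∫ ω, |g ω| ∂μ) (fun n ↦ ?_)
    (.of_forall fun ω ↦ mul_nonneg (hD₀ ω) (hY₀ ω)) (.of_forall fun n ↦ ?_)
  · rw [← integrable_indicator_iff (hm _ (hs n)), hprod]
    exact hint n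
  · have hpull := condExp_stronglyMeasurable_mul_of_bound hm (hDs n) hY n (hbound n)
    rw [← integral_indicator (hm _ (hs n)), hprod, ← integral_condExp hm]
    refine integral_mono_ae integrable_condExp hg.abs ?_
    filter_upwards [hpull, hle] with ω hω hleω
    rw [hω]
    by_cases hωs : ω ∈ s n
    · simpa [hωs] using hleω.trans (le_abs_self _)
    · simp [hωs]

lemma condExp_mul_le (hm : m ≤ m0) {D Y g : Ω → ℝ} (hD : StronglyMeasurable[m] D)
    (hD₀ : 0 ≤ D) (hY : Integrable Y μ) (hY₀ : 0 ≤ Y) (hg : Integrable g μ)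
    (hle : D * μ[Y | m] ≤ᵐ[μ] g) : μ[D * Y | m] ≤ᵐ[μ] g :=
  (condExp_mul_of_stronglyMeasurable_left hD
    (integrable_mul_of_mul_condExp_le hm hD hD₀ hY hY₀ hg hle) hY).trans_le hle

lemma integrable_one_add_mul_add_mul (hm : m ≤ m0) {w c ψ x : Ω → ℝ} {K L : ℝ}
    (hw : StronglyMeasurable[m] w) (hwK : ∀ ω, ‖w ω‖ ≤ K) (hc : StronglyMeasurable[m] c)
    (hcL : ∀ ω, ‖c ω‖ ≤ L) (hψ : Integrable ψ μ) (hx : Integrable x μ) :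
    Integrable (1 + w * ψ + c * x) μ :=
  ((integrable_const 1).add (hψ.bdd_mul (hw.mono hm).aestronglyMeasurable (.of_forall hwK))).add
    (hx.bdd_mul (hc.mono hm).aestronglyMeasurable (.of_forall hcL))

lemma condExp_one_add_mul_add_mul (hm : m ≤ m0) {w c ψ x : Ω → ℝ} {K L : ℝ}
    (hw : StronglyMeasurable[m] w) (hwK : ∀ ω, ‖w ω‖ ≤ K) (hc : StronglyMeasurable[m] c)
    (hcL : ∀ ω, ‖c ω‖ ≤ L) (hψ : Integrable ψ μ) (hx : Integrable x μ) (hx₀ : μ[x | m] =ᵐ[μ] 0) :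
    μ[1 + w * ψ + c * x | m] =ᵐ[μ] 1 + w * μ[ψ | m] := by
  have hwψ : Integrable (w * ψ) μ :=
    hψ.bdd_mul (hw.mono hm).aestronglyMeasurable (.of_forall hwK)
  have hcx : Integrable (c * x) μ :=
    hx.bdd_mul (hc.mono hm).aestronglyMeasurable (.of_forall hcL)
  have hone : Integrable (1 : Ω → ℝ) μ := integrable_const 1
  have hcondExp_one : μ[(1 : Ω → ℝ) | m] = 1 := condExp_const hm 1
  filter_upwards [condExp_add (hone.add hwψ) hcx m, condExp_add hone hwψ m,
    condExp_mul_of_stronglyMeasurable_left hw hwψ hψ,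
    condExp_mul_of_stronglyMeasurable_left hc hcx hx, hx₀] with ω hsum hsum' hpull_w hpull_c hzero
  simp only [hsum, hsum', hpull_w, hpull_c, hzero, hcondExp_one, Pi.add_apply, Pi.mul_apply,
    Pi.zero_apply, mul_zero, add_zero]

lemma integrable_and_condExp_le_of_le_one_add_mul_add_mul (hm : m ≤ m0) {Y w c ψ x : Ω → ℝ}
    {K L : ℝ} (hY : AEStronglyMeasurable Y μ) (hY₀ : 0 ≤ Y) (hYle : Y ≤ 1 + w * ψ + c * x)
    (hw : StronglyMeasurable[m] w) (hwK : ∀ ω, ‖w ω‖ ≤ K) (hc : StronglyMeasurable[m] c)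
    (hcL : ∀ ω, ‖c ω‖ ≤ L) (hψ : Integrable ψ μ) (hx : Integrable x μ) (hx₀ : μ[x | m] =ᵐ[μ] 0) :
    Integrable Y μ ∧ μ[Y | m] ≤ᵐ[μ] 1 + w * μ[ψ | m] := by
  have hbound := integrable_one_add_mul_add_mul hm hw hwK hc hcL hψ hx
  have hYint : Integrable Y μ := hbound.mono' hY <| .of_forall fun ω ↦
    (norm_of_nonneg (hY₀ ω)).trans_le (hYle ω)
  exact ⟨hYint, (condExp_mono hYint hbound (.of_forall hYle)).trans_eq
    (condExp_one_add_mul_add_mul hm hw hwK hc hcL hψ hx hx₀)⟩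

end CondExp

section OneStep

variable {Ω H : Type*} {m m0 : MeasurableSpace Ω} {μ : Measure Ω}
  [NormedAddCommGroup H] [InnerProductSpace ℝ H] {u g : Ω → H} {x : Ω → ℝ} {l : ℝ}

lemma stronglyMeasurable_logCoshNormDeriv (hu : StronglyMeasurable[m] fun ω ↦ ‖u ω‖)
    (hug : StronglyMeasurable[m] fun ω ↦ ⟪u ω, g ω⟫) :
    StronglyMeasurable[m] fun ω ↦ logCoshNormDeriv (l • u ω) (l • g ω) := by
  simp only [logCoshNormDeriv, norm_smul, real_inner_smul_left, real_inner_smul_right,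
    tanh_eq_sinh_div_cosh]
  have hlu := hu.const_mul ‖l‖
  have htanh := (continuous_sinh.comp_stronglyMeasurable hlu).measurable.div
    (continuous_cosh.comp_stronglyMeasurable hlu).measurable
  exact (htanh.div hlu.measurable).stronglyMeasurable.mul ((hug.const_mul l).const_mul l)

lemma aestronglyMeasurable_norm_add_smul (hu : AEStronglyMeasurable (fun ω ↦ ‖u ω‖) μ)
    (hg : AEStronglyMeasurable (fun ω ↦ ‖g ω‖) μ)
    (hug : AEStronglyMeasurable (fun ω ↦ ⟪u ω, g ω⟫) μ) (hx : AEStronglyMeasurable x μ) :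
    AEStronglyMeasurable (fun ω ↦ ‖u ω + x ω • g ω‖) μ := by
  have hnorm (ω : Ω) : ‖u ω + x ω • g ω‖ =
      √(‖u ω‖ ^ 2 + 2 * (x ω * ⟪u ω, g ω⟫) + (‖x ω‖ * ‖g ω‖) ^ 2) := by
    rw [← norm_smul, ← real_inner_smul_right, ← norm_add_sq_real, sqrt_sq (norm_nonneg _)]
  simp only [hnorm]
  exact continuous_sqrt.comp_aestronglyMeasurable
    (((hu.pow 2).add ((hx.mul hug).const_mul 2)).add ((hx.norm.mul hg).pow 2))

lemma integrable_exp_mul_abs_sub_sub_one [IsFiniteMeasure μ] (hx : Integrable x μ)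
    (hexp : Integrable (fun ω ↦ exp (l * |x ω|)) μ) :
    Integrable (fun ω ↦ exp (l * |x ω|) - l * |x ω| - 1) μ :=
  (hexp.sub (hx.abs.const_mul l)).sub (integrable_const 1)

theorem integrable_and_condExp_cosh_div_cosh_le [IsFiniteMeasure μ] (hm : m ≤ m0) (hl : 0 ≤ l)
    (hu : StronglyMeasurable[m] fun ω ↦ ‖u ω‖) (hg : StronglyMeasurable[m] fun ω ↦ ‖g ω‖)
    (hug : StronglyMeasurable[m] fun ω ↦ ⟪u ω, g ω⟫) (hg₁ : ∀ ω, ‖g ω‖ ≤ 1)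
    (hx : Integrable x μ) (hx₀ : μ[x | m] =ᵐ[μ] 0)
    (hexp : Integrable (fun ω ↦ exp (l * |x ω|)) μ) :
    Integrable (fun ω ↦ cosh (l * ‖u ω + x ω • g ω‖) / cosh (l * ‖u ω‖)) μ ∧
      μ[fun ω ↦ cosh (l * ‖u ω + x ω • g ω‖) / cosh (l * ‖u ω‖) | m] ≤ᵐ[μ]
        fun ω ↦ 1 + ‖g ω‖ ^ 2 * (μ[fun ω ↦ exp (l * |x ω|) - l * |x ω| - 1 | m]) ω := by
  have hw₁ (ω : Ω) : ‖‖g ω‖ ^ 2‖ ≤ 1 := by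
    rw [norm_of_nonneg (sq_nonneg _)]
    exact pow_le_one₀ (norm_nonneg _) (hg₁ ω)
  have hcl (ω : Ω) : ‖logCoshNormDeriv (l • u ω) (l • g ω)‖ ≤ l :=
    (abs_logCoshNormDeriv_le _ _).trans <| by
      rw [norm_smul_of_nonneg hl]
      exact mul_le_of_le_one_right hl (hg₁ ω)
  have hmeas : AEStronglyMeasurable (fun ω ↦ cosh (l * ‖u ω + x ω • g ω‖) / cosh (l * ‖u ω‖)) μ :=
    (continuous_cosh.comp_aestronglyMeasurable <|
      (aestronglyMeasurable_norm_add_smul (hu.mono hm).aestronglyMeasurable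
        (hg.mono hm).aestronglyMeasurable (hug.mono hm).aestronglyMeasurable hx.1).const_mul l).div₀
    (continuous_cosh.comp_aestronglyMeasurable ((hu.mono hm).aestronglyMeasurable.const_mul l))
  exact integrable_and_condExp_le_of_le_one_add_mul_add_mul hm hmeas
    (fun ω ↦ div_nonneg (cosh_pos _).le (cosh_pos _).le)
    (fun ω ↦ (div_le_iff₀' (cosh_pos _)).2 (cosh_mul_norm_add_smul_le hl (u ω) (hg₁ ω) (x ω)))
    (hg.pow 2) hw₁ (stronglyMeasurable_logCoshNormDeriv hu hug) hcl
    (integrable_exp_mul_abs_sub_sub_one hx hexp) hx hx₀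

end OneStep

section Filtration

variable {Ω E : Type*} {m0 : MeasurableSpace Ω} {ℱ : Filtration ℕ m0} [TopologicalSpace E]
  {Z : ℕ → Ω → E} {i t : ℕ}

lemma stronglyMeasurable_of_mem_Icc (hZ : ∀ t, StronglyMeasurable[ℱ (t + 1)] (Z (t + 1)))
    (hi : i ∈ Finset.Icc 1 t) : StronglyMeasurable[ℱ t] (Z i) := by
  obtain ⟨hi₁, hit⟩ := Finset.mem_Icc.1 hi
  obtain ⟨j, rfl⟩ := Nat.exists_eq_add_of_le' hi₁
  exact (hZ j).mono (ℱ.mono hit)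

lemma stronglyMeasurable_of_mem_Icc_succ (hZ : ∀ t, StronglyMeasurable[ℱ t] (Z (t + 1)))
    (hi : i ∈ Finset.Icc 1 (t + 1)) : StronglyMeasurable[ℱ t] (Z i) := by
  obtain ⟨hi₁, hit⟩ := Finset.mem_Icc.1 hi
  obtain ⟨j, rfl⟩ := Nat.exists_eq_add_of_le' hi₁
  exact (hZ j).mono (ℱ.mono (Nat.succ_le_succ_iff.1 hit))

end Filtration

section CoshProcess

variable {Ω H : Type*} {m0 : MeasurableSpace Ω} [NormedAddCommGroup H] [InnerProductSpace ℝ H]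

/-- The noise-weighted sum `M_t = ∑ i ∈ [1, t], εᵢ Xᵢ`. -/
noncomputable def noiseSum (X : ℕ → Ω → H) (ε : ℕ → Ω → ℝ) (t : ℕ) (ω : Ω) : H :=
  ∑ i ∈ Finset.Icc 1 t, ε i ω • X i ω

/-- The increment `e_t = ‖R_t X_t‖² E[exp (l |ε_t|) - l |ε_t| - 1 | ℱ_{t-1}]` compensating the
growth of `cosh (l ‖R_t M_t‖)`. -/
noncomputable def compensator (ℱ : Filtration ℕ m0) (μ : Measure Ω) (X : ℕ → Ω → H)
    (ε : ℕ → Ω → ℝ) (R : ℕ → Ω → H →L[ℝ] H) (l : ℝ) (t : ℕ) (ω : Ω) : ℝ :=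
  ‖R t ω (X t ω)‖ ^ 2 * (μ[fun ω' ↦ exp (l * |ε t ω'|) - l * |ε t ω'| - 1 | ℱ (t - 1)]) ω

/-- The weight `cosh (l ‖R M‖) exp (-∑ i ∈ [1, t], eᵢ)` of a random vector `M` for a random operator
`R` after `t` compensating increments `e`. -/
noncomputable def compensatedCosh (R : Ω → H →L[ℝ] H) (M : Ω → H) (e : ℕ → Ω → ℝ) (l : ℝ) (t : ℕ)
    (ω : Ω) : ℝ :=
  cosh (l * ‖R ω (M ω)‖) * exp (-(∑ i ∈ Finset.Icc 1 t, e i ω))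

/-- The process `S_t = cosh (l ‖R_t M_t‖) exp (-∑ i ∈ [1, t], eᵢ)`. -/
noncomputable def coshProcess (ℱ : Filtration ℕ m0) (μ : Measure Ω) (X : ℕ → Ω → H)
    (ε : ℕ → Ω → ℝ) (R : ℕ → Ω → H →L[ℝ] H) (l : ℝ) (t : ℕ) : Ω → ℝ :=
  compensatedCosh (R t) (noiseSum X ε t) (compensator ℱ μ X ε R l) l t

variable {ℱ : Filtration ℕ m0} {μ : Measure Ω} {X : ℕ → Ω → H} {ε e : ℕ → Ω → ℝ} {l : ℝ} {t : ℕ}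

lemma noiseSum_succ (X : ℕ → Ω → H) (ε : ℕ → Ω → ℝ) (t : ℕ) (ω : Ω) :
    noiseSum X ε (t + 1) ω = noiseSum X ε t ω + ε (t + 1) ω • X (t + 1) ω :=
  Finset.sum_Icc_succ_top (Nat.le_add_left 1 t) _

lemma compensatedCosh_nonneg (R : Ω → H →L[ℝ] H) (M : Ω → H) (e : ℕ → Ω → ℝ) (l : ℝ) (t : ℕ)
    (ω : Ω) : 0 ≤ compensatedCosh R M e l t ω :=
  mul_nonneg (cosh_pos _).le (exp_pos _).le

lemma coshProcess_succ {R : ℕ → Ω → H →L[ℝ] H} (ω : Ω) :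
    coshProcess ℱ μ X ε R l (t + 1) ω =
      compensatedCosh (R (t + 1)) (noiseSum X ε t) (compensator ℱ μ X ε R l) l (t + 1) ω *
        (cosh (l * ‖R (t + 1) ω (noiseSum X ε t ω) + ε (t + 1) ω • R (t + 1) ω (X (t + 1) ω)‖) /
          cosh (l * ‖R (t + 1) ω (noiseSum X ε t ω)‖)) := by
  have hcosh := (cosh_pos (l * ‖R (t + 1) ω (noiseSum X ε t ω)‖)).ne'
  rw [← map_smul, ← map_add, ← noiseSum_succ, coshProcess, compensatedCosh, compensatedCosh]
  field_simp

lemma coshProcess_zero {R : ℕ → Ω → H →L[ℝ] H} : coshProcess ℱ μ X ε R l 0 = 1 := by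
  ext ω
  simp [coshProcess, compensatedCosh, noiseSum]

lemma compensatedCosh_succ_mul_one_add_le {R R' : Ω → H →L[ℝ] H} {M : Ω → H} (hl : 0 ≤ l) {ω : Ω}
    (hRR' : ‖R' ω (M ω)‖ ≤ ‖R ω (M ω)‖) :
    compensatedCosh R' M e l (t + 1) ω * (1 + e (t + 1) ω) ≤ compensatedCosh R M e l t ω :=
  calc compensatedCosh R' M e l (t + 1) ω * (1 + e (t + 1) ω)
      ≤ compensatedCosh R' M e l (t + 1) ω * exp (e (t + 1) ω) := by
        gcongr
        · exact compensatedCosh_nonneg _ _ _ _ _ _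
        · exact (add_comm _ _).trans_le (add_one_le_exp _)
    _ = compensatedCosh R' M e l t ω := by
        rw [compensatedCosh, compensatedCosh, mul_assoc, ← exp_add,
          Finset.sum_Icc_succ_top (Nat.le_add_left 1 t), neg_add, neg_add_cancel_right]
    _ ≤ compensatedCosh R M e l t ω := by
        refine mul_le_mul_of_nonneg_right (cosh_le_cosh.2 ?_) (exp_pos _).le
        rw [abs_of_nonneg (mul_nonneg hl (norm_nonneg _)),
          abs_of_nonneg (mul_nonneg hl (norm_nonneg _))]
        exact mul_le_mul_of_nonneg_left hRR' hl

lemma stronglyMeasurable_noiseSum (hX : ∀ t, StronglyMeasurable[ℱ t] (X (t + 1)))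
    (hε : ∀ t, StronglyMeasurable[ℱ (t + 1)] (ε (t + 1))) (t : ℕ) :
    StronglyMeasurable[ℱ t] (noiseSum X ε t) :=
  Finset.stronglyMeasurable_fun_sum _ fun _ hi ↦
    (stronglyMeasurable_of_mem_Icc hε hi).smul <|
      stronglyMeasurable_of_mem_Icc_succ hX (Finset.Icc_subset_Icc_right t.le_succ hi)

variable [CompleteSpace H] {A₀ : H →L[ℝ] H} {R : ℕ → Ω → H →L[ℝ] H}

lemma stronglyMeasurable_compensatedCosh {_ : MeasurableSpace Ω} {A R : Ω → H →L[ℝ] H} {M : Ω → H}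
    (hA : StronglyMeasurable A) (hR : ∀ ω, IsInvSqrt (A ω) (R ω)) (hM : StronglyMeasurable M)
    (he : ∀ i ∈ Finset.Icc 1 t, StronglyMeasurable (e i)) :
    StronglyMeasurable (compensatedCosh R M e l t) :=
  (continuous_cosh.comp_stronglyMeasurable
      ((stronglyMeasurable_norm_invSqrt hA hR hM).const_mul l)).mul
    (continuous_exp.comp_stronglyMeasurable (Finset.stronglyMeasurable_fun_sum _ he).neg)

lemma stronglyMeasurable_compensator_succ (hX : ∀ t, StronglyMeasurable[ℱ t] (X (t + 1)))
    (hR : ∀ t ω, IsInvSqrt (regGram A₀ (X · ω) t) (R t ω)) (t : ℕ) :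
    StronglyMeasurable[ℱ t] (compensator ℱ μ X ε R l (t + 1)) :=
  have hA := stronglyMeasurable_regGram A₀ fun _ ↦ stronglyMeasurable_of_mem_Icc_succ (t := t) hX
  ((stronglyMeasurable_norm_invSqrt hA (hR (t + 1)) (hX t)).pow 2).mul stronglyMeasurable_condExp

lemma stronglyAdapted_coshProcess (hX : ∀ t, StronglyMeasurable[ℱ t] (X (t + 1)))
    (hε : ∀ t, StronglyMeasurable[ℱ (t + 1)] (ε (t + 1)))
    (hR : ∀ t ω, IsInvSqrt (regGram A₀ (X · ω) t) (R t ω)) :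
    StronglyAdapted ℱ (coshProcess ℱ μ X ε R l) := fun t ↦
  have hA := stronglyMeasurable_regGram A₀ fun _ hi ↦
    stronglyMeasurable_of_mem_Icc_succ hX (Finset.Icc_subset_Icc_right t.le_succ hi)
  stronglyMeasurable_compensatedCosh hA (hR t) (stronglyMeasurable_noiseSum hX hε t) fun _ hi ↦
    stronglyMeasurable_of_mem_Icc_succ (stronglyMeasurable_compensator_succ hX hR)
      (Finset.Icc_subset_Icc_right t.le_succ hi)

lemma integrable_and_condExp_coshProcess_succ_le [IsFiniteMeasure μ]
    (hX : ∀ t, StronglyMeasurable[ℱ t] (X (t + 1)))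
    (hε : ∀ t, StronglyMeasurable[ℱ (t + 1)] (ε (t + 1)))
    (hR : ∀ t ω, IsInvSqrt (regGram A₀ (X · ω) t) (R t ω)) (hl : 0 ≤ l)
    (hεint : Integrable (ε (t + 1)) μ) (hε₀ : μ[ε (t + 1) | ℱ t] =ᵐ[μ] 0)
    (hexp : Integrable (fun ω ↦ exp (l * |ε (t + 1) ω|)) μ)
    (hint : Integrable (coshProcess ℱ μ X ε R l t) μ) :
    Integrable (coshProcess ℱ μ X ε R l (t + 1)) μ ∧
      μ[coshProcess ℱ μ X ε R l (t + 1) | ℱ t] ≤ᵐ[μ] coshProcess ℱ μ X ε R l t := by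
  set e := compensator ℱ μ X ε R l
  have hA := stronglyMeasurable_regGram A₀ fun _ ↦ stronglyMeasurable_of_mem_Icc_succ (t := t) hX
  have hM := stronglyMeasurable_noiseSum hX hε t
  let D : Ω → ℝ := compensatedCosh (R (t + 1)) (noiseSum X ε t) e l (t + 1)
  let Y : Ω → ℝ := fun ω ↦ cosh (l * ‖R (t + 1) ω (noiseSum X ε t ω) +
    ε (t + 1) ω • R (t + 1) ω (X (t + 1) ω)‖) / cosh (l * ‖R (t + 1) ω (noiseSum X ε t ω)‖)
  have hD : StronglyMeasurable[ℱ t] D := stronglyMeasurable_compensatedCosh hA (hR (t + 1)) hM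
    fun _ ↦ stronglyMeasurable_of_mem_Icc_succ (stronglyMeasurable_compensator_succ hX hR)
  have hD₀ : 0 ≤ D := compensatedCosh_nonneg _ _ _ _ _
  have hY₀ : 0 ≤ Y := fun ω ↦ div_nonneg (cosh_pos _).le (cosh_pos _).le
  obtain ⟨hY, hY_le⟩ : Integrable Y μ ∧ μ[Y | ℱ t] ≤ᵐ[μ] fun ω ↦ 1 + e (t + 1) ω :=
    integrable_and_condExp_cosh_div_cosh_le (ℱ.le t) hl
      (stronglyMeasurable_norm_invSqrt hA (hR (t + 1)) hM)
      (stronglyMeasurable_norm_invSqrt hA (hR (t + 1)) (hX t))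
      (stronglyMeasurable_inner_invSqrt hA (hR (t + 1)) hM (hX t))
      (fun ω ↦ (hR (t + 1) ω).norm_map_le_one (outerProd_le_regGram_succ (hR t ω).nonneg))
      hεint hε₀ hexp
  have hDY_le : D * μ[Y | ℱ t] ≤ᵐ[μ] coshProcess ℱ μ X ε R l t := by
    filter_upwards [hY_le] with ω hω
    have hnorm_le := (hR t ω).norm_map_le_of_le (hR (t + 1) ω) (regGram_le_regGram_succ _ _ _)
    exact (mul_le_mul_of_nonneg_left hω (hD₀ ω)).trans
      (compensatedCosh_succ_mul_one_add_le hl (hnorm_le _))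
  rw [(funext fun ω ↦ coshProcess_succ ω : coshProcess ℱ μ X ε R l (t + 1) = D * Y)]
  exact ⟨integrable_mul_of_mul_condExp_le (ℱ.le t) hD hD₀ hY hY₀ hint hDY_le,
    condExp_mul_le (ℱ.le t) hD hD₀ hY hY₀ hint hDY_le⟩

end CoshProcess

theorem stmt_0_general {H : Type*} [NormedAddCommGroup H] [InnerProductSpace ℝ H]
    [CompleteSpace H] {Ω : Type*} {m0 : MeasurableSpace Ω} {μ : Measure Ω} [IsFiniteMeasure μ]
    (ℱ : Filtration ℕ m0) (X : ℕ → Ω → H) (ε : ℕ → Ω → ℝ)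
    (hX : ∀ t, 1 ≤ t → StronglyMeasurable[ℱ (t - 1)] (X t))
    (hε : ∀ t, 1 ≤ t → StronglyMeasurable[ℱ t] (ε t))
    (hεint : ∀ t, 1 ≤ t → Integrable (ε t) μ)
    (hε₀ : ∀ t, 1 ≤ t → μ[ε t | ℱ (t - 1)] =ᵐ[μ] 0)
    {A₀ : H →L[ℝ] H} {R : ℕ → Ω → H →L[ℝ] H}
    (hR : ∀ t ω, IsInvSqrt (regGram A₀ (X · ω) t) (R t ω)) {l : ℝ} (hl : 0 ≤ l)
    (hexp : ∀ t, 1 ≤ t → Integrable (fun ω ↦ exp (l * |ε t ω|)) μ) :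
    Supermartingale (coshProcess ℱ μ X ε R l) ℱ μ := by
  have hX' (t : ℕ) : StronglyMeasurable[ℱ t] (X (t + 1)) := hX (t + 1) t.succ_pos
  have hε' (t : ℕ) : StronglyMeasurable[ℱ (t + 1)] (ε (t + 1)) := hε (t + 1) t.succ_pos
  have hstep (t : ℕ) := integrable_and_condExp_coshProcess_succ_le hX' hε' hR hl
    (hεint (t + 1) t.succ_pos) (hε₀ (t + 1) t.succ_pos) (hexp (t + 1) t.succ_pos)
  have hint (t : ℕ) : Integrable (coshProcess ℱ μ X ε R l t) μ := by
    induction t with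
    | zero => rw [coshProcess_zero]; exact integrable_const 1
    | succ t ih => exact (hstep t ih).1
  exact supermartingale_nat (stronglyAdapted_coshProcess hX' hε' hR) hint
    fun t ↦ (hstep t (hint t)).2

theorem stmt_0
    {H : Type*} [NormedAddCommGroup H] [InnerProductSpace ℝ H] [CompleteSpace H]
    [SecondCountableTopology H]
    {Ω : Type*} {m0 : MeasurableSpace Ω} {μ : Measure Ω} [IsProbabilityMeasure μ]
    (ℱ : Filtration ℕ m0)
    (X : ℕ → Ω → H) (ε : ℕ → Ω → ℝ)
    (hX : ∀ t, 1 ≤ t → StronglyMeasurable[ℱ (t - 1)] (X t))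
    (hεmeas : ∀ t, 1 ≤ t → StronglyMeasurable[ℱ t] (ε t))
    (hεint : ∀ t, 1 ≤ t → Integrable (ε t) μ)
    (hε0 : ∀ t, 1 ≤ t → μ[ε t | ℱ (t - 1)] =ᵐ[μ] 0)
    (ρ : ℝ) (hρ : 0 < ρ)
    (Q Qinv : ℕ → Ω → H →L[ℝ] H)
    (hQpos : ∀ t ω, (Q t ω).IsPositive)
    (hQsq : ∀ t ω, Q t ω ∘L Q t ω =
      ρ • (1 : H →L[ℝ] H) + ∑ i ∈ Finset.Icc 1 t, outerProd (X i ω))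
    (hQinv : ∀ t ω, Qinv t ω ∘L Q t ω = 1 ∧ Q t ω ∘L Qinv t ω = 1)
    (l : ℝ) (hl : 0 < l)
    (hmgf : ∀ t, 1 ≤ t → Integrable (fun ω => Real.exp (l * |ε t ω|)) μ)
    (e : ℕ → Ω → ℝ)
    (he : ∀ t ω, e t ω = ‖Qinv t ω (X t ω)‖ ^ 2 *
      (μ[fun ω' => Real.exp (l * |ε t ω'|) - l * |ε t ω'| - 1 | ℱ (t - 1)]) ω)
    (S : ℕ → Ω → ℝ)
    (hS : ∀ t ω, S t ω =
      Real.cosh (l * ‖Qinv t ω (∑ i ∈ Finset.Icc 1 t, ε i ω • X i ω)‖) *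
        Real.exp (-(∑ i ∈ Finset.Icc 1 t, e i ω))) :
    (∀ t ω, 0 ≤ S t ω) ∧
      ∀ t, 1 ≤ t → μ[S t | ℱ (t - 1)] ≤ᵐ[μ] S (t - 1) := by
  obtain rfl : e = compensator ℱ μ X ε Qinv l := funext₂ he
  obtain rfl : S = coshProcess ℱ μ X ε Qinv l := funext₂ hS
  have hR (t : ℕ) (ω : Ω) : IsInvSqrt (regGram (ρ • 1) (X · ω) t) (Qinv t ω) :=
    .of_sqrt (hQpos t ω).isSymmetric (hQsq t ω) (hQinv t ω).1 (hQinv t ω).2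
  have hsuper := stmt_0_general ℱ X ε hX hεmeas hεint hε0 hR hl.le hmgf
  exact ⟨fun t ↦ compensatedCosh_nonneg _ _ _ _ _, fun t _ ↦ hsuper.2.1 _ _ (t.sub_le 1)⟩
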